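/- Let M be a real N×N matrix, c ∈ ℝ with μ₂[M] ≤ c, and Δt > 0 with cΔt ≤ 1. Then I − (Δt/2)M is invertible and the Crank–Nicolson amplification matrix R(ΔtM) = (I − (Δt/2)M)^{−1}(I + (Δt/2)M) satisfies ‖R(ΔtM)ⁿ‖₂ ≤ (1 + 2Δt·c⁺)ⁿ ≤ e^{2nΔt·c⁺} for every integer n ≥ 0, where c⁺ = max(c, 0). In particular ‖R(ΔtM)ⁿ‖₂ ≤ e^{2T·c⁺} whenever nΔt ≤ T. -/

import Mathlib

/-!
If `Re ⟪A x, x⟫ ≤ a ‖x‖²` with `0 ≤ a < 1`, Cauchy–Schwarz gives `(1 - a) ‖x‖ ≤ ‖x - A x‖`, and then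
polarization gives
`‖x + A x‖² = ‖x - A x‖² + 4 Re ⟪A x, x⟫ ≤ (1 + 4 a / (1 - a)²) ‖x - A x‖²`.
Since `(1 - a)² + 4 a = (1 + a)²`, the Cayley transform `(1 - A)⁻¹ (1 + A)` has norm at most
`(1 + a) / (1 - a)`, the value of the Cayley transform at the scalar `a`. With `A` replaced by
`(τ / 2) A` this is the Crank–Nicolson step, and `(1 + a) / (1 - a) ≤ 1 + 4 a` for `a ≤ 1 / 2`.
-/

open Matrix

/-- The Euclidean (ℓ2) norm of a vector. -/
noncomputable def l2norm {n : Type*} [Fintype n] (v : n → ℝ) : ℝ :=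
  Real.sqrt (∑ i, (v i)^2)

open scoped InnerProductSpace

section RealBounds

lemma one_add_div_one_sub_le {a : ℝ} (ha₀ : 0 ≤ a) (ha : a ≤ 1 / 2) :
    (1 + a) / (1 - a) ≤ 1 + 4 * a := by
  rw [div_le_iff₀ (by linarith)]
  have : 0 ≤ 2 * a * (1 - 2 * a) := mul_nonneg (by linarith) (by linarith)
  linarith

lemma one_add_pow_le_exp_nat_mul {x : ℝ} (hx : -1 ≤ x) (n : ℕ) :
    (1 + x) ^ n ≤ Real.exp (n * x) := by
  rw [Real.exp_nat_mul]
  exact pow_le_pow_left₀ (by linarith) (by linarith [Real.add_one_le_exp x]) n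

end RealBounds

section Cayley

variable {R S : Type*} [Ring R] [Ring S]

/-- The Cayley transform `(1 - a)⁻¹ (1 + a)` in a ring. The Crank–Nicolson stability function is
`R(z) = cayley (z / 2)`. The inverse is `Ring.inverse`, so the value is `0` unless `1 - a` is a
unit. -/
noncomputable def cayley (a : R) : R := Ring.inverse (1 - a) * (1 + a)

lemma cayley_mul_one_sub {a : R} (ha : IsUnit (1 - a)) : cayley a * (1 - a) = 1 + a := by
  have hcomm : (1 + a) * (1 - a) = (1 - a) * (1 + a) := by noncomm_ring
  rw [cayley, mul_assoc, hcomm, Ring.inverse_mul_cancel_left _ _ ha]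

lemma map_cayley {F : Type*} [FunLike F R S] [RingHomClass F R S] (f : F) {a : R}
    (ha : IsUnit (1 - a)) : f (cayley a) = cayley (f a) := by
  have hfa : IsUnit (1 - f a) := by simpa using ha.map f
  refine hfa.mul_left_cancel ?_
  calc (1 - f a) * f (cayley a) = f ((1 - a) * cayley a) := by simp
    _ = 1 + f a := by rw [cayley, Ring.mul_inverse_cancel_left _ _ ha, map_add, map_one]
    _ = (1 - f a) * cayley (f a) := by rw [cayley, Ring.mul_inverse_cancel_left _ _ hfa]

end Cayley

section InnerProduct

variable {𝕜 E : Type*} [RCLike 𝕜] [NormedAddCommGroup E] [InnerProductSpace 𝕜 E]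

lemma one_sub_mul_sq_norm_le_re_inner_sub {x y : E} {a : ℝ}
    (hxy : RCLike.re ⟪y, x⟫_𝕜 ≤ a * ‖x‖ ^ 2) :
    (1 - a) * ‖x‖ ^ 2 ≤ RCLike.re ⟪x - y, x⟫_𝕜 := by
  rw [inner_sub_left, map_sub, inner_self_eq_norm_sq]
  linarith

lemma one_sub_mul_norm_le_norm_sub {x y : E} {a : ℝ}
    (hxy : RCLike.re ⟪y, x⟫_𝕜 ≤ a * ‖x‖ ^ 2) : (1 - a) * ‖x‖ ≤ ‖x - y‖ := by
  rcases (norm_nonneg x).eq_or_lt with hx | hx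
  · simp [← hx]
  · refine le_of_mul_le_mul_right ?_ hx
    calc (1 - a) * ‖x‖ * ‖x‖ = (1 - a) * ‖x‖ ^ 2 := by ring
      _ ≤ RCLike.re ⟪x - y, x⟫_𝕜 := one_sub_mul_sq_norm_le_re_inner_sub hxy
      _ ≤ ‖x - y‖ * ‖x‖ := re_inner_le_norm _ _

lemma norm_add_sq_eq_norm_sub_sq_add (x y : E) :
    ‖x + y‖ ^ 2 = ‖x - y‖ ^ 2 + 4 * RCLike.re ⟪y, x⟫_𝕜 := by
  rw [norm_add_sq (𝕜 := 𝕜), norm_sub_sq (𝕜 := 𝕜), inner_re_symm]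
  ring

lemma one_sub_mul_norm_add_le {x y : E} {a : ℝ} (ha₀ : 0 ≤ a) (ha : a ≤ 1)
    (hxy : RCLike.re ⟪y, x⟫_𝕜 ≤ a * ‖x‖ ^ 2) :
    (1 - a) * ‖x + y‖ ≤ (1 + a) * ‖x - y‖ := by
  have ha' : 0 ≤ 1 - a := sub_nonneg.2 ha
  have hlower : ((1 - a) * ‖x‖) ^ 2 ≤ ‖x - y‖ ^ 2 :=
    pow_le_pow_left₀ (mul_nonneg ha' (norm_nonneg x)) (one_sub_mul_norm_le_norm_sub hxy) 2
  refine le_of_sq_le_sq ?_ (by positivity)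
  calc ((1 - a) * ‖x + y‖) ^ 2
      = (1 - a) ^ 2 * ‖x - y‖ ^ 2 + 4 * (1 - a) ^ 2 * RCLike.re ⟪y, x⟫_𝕜 := by
        rw [mul_pow, norm_add_sq_eq_norm_sub_sq_add (𝕜 := 𝕜)]; ring
    _ ≤ (1 - a) ^ 2 * ‖x - y‖ ^ 2 + 4 * (1 - a) ^ 2 * (a * ‖x‖ ^ 2) := by gcongr
    _ = (1 - a) ^ 2 * ‖x - y‖ ^ 2 + 4 * a * ((1 - a) * ‖x‖) ^ 2 := by ring
    _ ≤ (1 - a) ^ 2 * ‖x - y‖ ^ 2 + 4 * a * ‖x - y‖ ^ 2 := by gcongr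
    _ = ((1 + a) * ‖x - y‖) ^ 2 := by ring

end InnerProduct

section LogNorm

variable {𝕜 E : Type*} [RCLike 𝕜] [NormedAddCommGroup E] [InnerProductSpace 𝕜 E]
  {A : E →L[𝕜] E} {a c τ : ℝ}

/-- The logarithmic norm of the operator `A` is at most `c`, that is, `μ₂[A] ≤ c`. Only upper bounds
on `μ₂` are needed, so the supremum of the Rayleigh quotients itself is not formed; this also avoids
its junk value on the trivial space. -/
def LogNormLE (A : E →L[𝕜] E) (c : ℝ) : Prop :=
  ∀ x, RCLike.re ⟪A x, x⟫_𝕜 ≤ c * ‖x‖ ^ 2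

namespace LogNormLE

lemma mono (hA : LogNormLE A a) (hac : a ≤ c) : LogNormLE A c :=
  fun x ↦ (hA x).trans (by gcongr)

lemma smul (hA : LogNormLE A c) (hτ : 0 ≤ τ) : LogNormLE ((τ : 𝕜) • A) (τ * c) := fun x ↦ by
  rw [_root_.smul_apply, inner_smul_left, RCLike.conj_ofReal, RCLike.re_ofReal_mul, mul_assoc]
  exact mul_le_mul_of_nonneg_left (hA x) hτ

lemma isUnit_one_sub [CompleteSpace E] (hA : LogNormLE A a) (ha : a < 1) : IsUnit (1 - A) := by
  have ha' : 0 < 1 - a := sub_pos.2 ha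
  refine ContinuousLinearMap.isUnit_of_forall_le_norm_inner_map _ (c := ⟨1 - a, ha'.le⟩) ha'
    fun x ↦ ?_
  calc ‖x‖ ^ 2 * (1 - a) = (1 - a) * ‖x‖ ^ 2 := mul_comm _ _
    _ ≤ RCLike.re ⟪(1 - A) x, x⟫_𝕜 := one_sub_mul_sq_norm_le_re_inner_sub (hA x)
    _ ≤ ‖⟪(1 - A) x, x⟫_𝕜‖ := RCLike.re_le_norm _

lemma norm_cayley_le [CompleteSpace E] (hA : LogNormLE A a) (ha₀ : 0 ≤ a) (ha : a < 1) :
    ‖cayley A‖ ≤ (1 + a) / (1 - a) := by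
  have ha' : 0 < 1 - a := sub_pos.2 ha
  have hunit : IsUnit (1 - A) := hA.isUnit_one_sub ha
  refine ContinuousLinearMap.opNorm_le_bound _ (by positivity) fun y ↦ ?_
  obtain ⟨x, rfl⟩ := (ContinuousLinearMap.isUnit_iff_bijective.1 hunit).surjective y
  have hstep : cayley A ((1 - A) x) = x + A x :=
    DFunLike.congr_fun (cayley_mul_one_sub hunit) x
  rw [hstep, div_mul_eq_mul_div, le_div_iff₀' ha']
  exact one_sub_mul_norm_add_le ha₀ ha.le (hA x)

lemma norm_cayley_pow_le [CompleteSpace E] (hA : LogNormLE A a) (ha₀ : 0 ≤ a) (ha : a ≤ 1 / 2)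
    (n : ℕ) : ‖cayley A ^ n‖ ≤ (1 + 4 * a) ^ n := by
  have hstep : ‖cayley A‖ ≤ 1 + 4 * a :=
    (hA.norm_cayley_le ha₀ (by linarith)).trans (one_add_div_one_sub_le ha₀ ha)
  rcases n.eq_zero_or_pos with rfl | hn
  · rw [pow_zero, pow_zero]
    exact ContinuousLinearMap.norm_id_le
  · exact (norm_pow_le' _ hn).trans (pow_le_pow_left₀ (norm_nonneg _) hstep n)

end LogNormLE

theorem crank_nicolson_l2_stability_general [CompleteSpace E] (hA : LogNormLE A c) (hτ : 0 ≤ τ)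
    (hc : c * τ ≤ 1) :
    IsUnit (1 - ((τ / 2 : ℝ) : 𝕜) • A) ∧
    ∀ n : ℕ,
      ‖cayley (((τ / 2 : ℝ) : 𝕜) • A) ^ n‖ ≤ (1 + 2 * τ * max c 0) ^ n ∧
      (1 + 2 * τ * max c 0) ^ n ≤ Real.exp (2 * n * τ * max c 0) ∧
      ∀ T : ℝ, n * τ ≤ T →
        ‖cayley (((τ / 2 : ℝ) : 𝕜) • A) ^ n‖ ≤ Real.exp (2 * T * max c 0) := by
  have hp : 0 ≤ max c 0 := le_max_right c 0
  have hcτ : τ / 2 * max c 0 ≤ 1 / 2 := by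
    have : max c 0 * τ ≤ 1 := by rw [max_mul_of_nonneg _ _ hτ]; simp [hc]
    linarith
  have hlog : LogNormLE (((τ / 2 : ℝ) : 𝕜) • A) (τ / 2 * max c 0) :=
    (hA.mono (le_max_left c 0)).smul (by positivity)
  refine ⟨hlog.isUnit_one_sub (by linarith), fun n ↦ ?_⟩
  have hpow : ‖cayley (((τ / 2 : ℝ) : 𝕜) • A) ^ n‖ ≤ (1 + 2 * τ * max c 0) ^ n := by
    convert hlog.norm_cayley_pow_le (by positivity) hcτ n using 2
    ring
  have hexp : (1 + 2 * τ * max c 0) ^ n ≤ Real.exp (2 * n * τ * max c 0) := by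
    convert one_add_pow_le_exp_nat_mul (x := 2 * τ * max c 0) (by linarith [mul_nonneg hτ hp]) n
      using 2
    ring
  refine ⟨hpow, hexp, fun T hT ↦ (hpow.trans hexp).trans (Real.exp_le_exp.2 ?_)⟩
  have := mul_le_mul_of_nonneg_right hT hp
  linarith

end LogNorm

section EuclideanMatrix

variable {n : Type*} [Fintype n]

lemma l2norm_eq_norm_toLp (v : n → ℝ) : l2norm v = ‖WithLp.toLp 2 v‖ := by
  simp [l2norm, EuclideanSpace.norm_eq]

variable [DecidableEq n] {M : Matrix n n ℝ}

lemma l2norm_mulVec_le {K : ℝ} (hM : ‖toEuclideanCLM (𝕜 := ℝ) M‖ ≤ K) (v : n → ℝ) :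
    l2norm (M *ᵥ v) ≤ K * l2norm v := by
  rw [l2norm_eq_norm_toLp, l2norm_eq_norm_toLp, ← toEuclideanCLM_toLp]
  exact ContinuousLinearMap.le_of_opNorm_le _ hM _

lemma logNormLE_toEuclideanCLM_iff {c : ℝ} :
    LogNormLE (toEuclideanCLM (𝕜 := ℝ) M) c ↔ ∀ v : n → ℝ, M *ᵥ v ⬝ᵥ v ≤ c * (v ⬝ᵥ v) := by
  have hquad (x : EuclideanSpace ℝ n) :
      RCLike.re ⟪toEuclideanCLM (𝕜 := ℝ) M x, x⟫_ℝ = M *ᵥ x.ofLp ⬝ᵥ x.ofLp := by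
    rw [RCLike.re_to_real, real_inner_comm, inner_toEuclideanCLM, dotProduct_comm]
  have hnorm (x : EuclideanSpace ℝ n) : ‖x‖ ^ 2 = x.ofLp ⬝ᵥ x.ofLp := by
    rw [EuclideanSpace.real_norm_sq_eq]
    simp only [dotProduct, sq]
  simp only [LogNormLE, hquad, hnorm]
  exact ⟨fun h v ↦ h (WithLp.toLp 2 v), fun h x ↦ h x.ofLp⟩

lemma isUnit_one_sub_toEuclideanCLM_iff :
    IsUnit (1 - toEuclideanCLM (𝕜 := ℝ) M) ↔ IsUnit (1 - M) := by
  rw [← map_one (toEuclideanCLM (n := n) (𝕜 := ℝ)), ← map_sub, isUnit_map_iff]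

lemma toEuclideanCLM_inv_mul_pow (hM : IsUnit (1 - M)) (k : ℕ) :
    toEuclideanCLM (𝕜 := ℝ) (((1 - M)⁻¹ * (1 + M)) ^ k) =
      cayley (toEuclideanCLM (𝕜 := ℝ) M) ^ k := by
  rw [map_pow, nonsing_inv_eq_ringInverse, ← cayley, map_cayley _ hM]

end EuclideanMatrix

/-- Let M be a real N×N matrix, c ∈ ℝ with μ₂[M] ≤ c, and Δt > 0
with cΔt ≤ 1.  Then I − (Δt/2)M is invertible and the Crank–Nicolson
amplification matrix R(ΔtM) = (I − (Δt/2)M)⁻¹(I + (Δt/2)M) satisfies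
‖R(ΔtM)ⁿ‖₂ ≤ (1 + 2Δt c⁺)ⁿ ≤ e^{2nΔt c⁺} for every n ≥ 0, where c⁺ = max(c,0);
in particular ‖R(ΔtM)ⁿ‖₂ ≤ e^{2T c⁺} whenever nΔt ≤ T. -/
theorem crank_nicolson_l2_stability
    (N : ℕ) (M : Matrix (Fin N) (Fin N) ℝ) (c : ℝ)
    (hM : ∀ v : Fin N → ℝ, (M.mulVec v) ⬝ᵥ v ≤ c * (v ⬝ᵥ v))
    (Δt : ℝ) (hΔt : 0 < Δt) (hc : c * Δt ≤ 1) :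
    IsUnit (1 - (Δt/2) • M) ∧
    ∀ n : ℕ,
      (∀ v : Fin N → ℝ,
        l2norm (((((1 - (Δt/2) • M)⁻¹) * (1 + (Δt/2) • M)) ^ n).mulVec v)
          ≤ (1 + 2*Δt*(max c 0))^n * l2norm v) ∧
      (1 + 2*Δt*(max c 0))^n ≤ Real.exp (2*(n : ℝ)*Δt*(max c 0)) ∧
      (∀ T : ℝ, (n : ℝ)*Δt ≤ T → ∀ v : Fin N → ℝ,
        l2norm (((((1 - (Δt/2) • M)⁻¹) * (1 + (Δt/2) • M)) ^ n).mulVec v)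
          ≤ Real.exp (2*T*(max c 0)) * l2norm v) := by
  obtain ⟨hunit, hbound⟩ :=
    crank_nicolson_l2_stability_general (logNormLE_toEuclideanCLM_iff.2 hM) hΔt.le hc
  simp only [RCLike.ofReal_real_eq_id, id, ← map_smul] at hunit hbound
  rw [isUnit_one_sub_toEuclideanCLM_iff] at hunit
  refine ⟨hunit, fun n ↦ ?_⟩
  obtain ⟨hpow, hexp, hT⟩ := hbound n
  rw [← toEuclideanCLM_inv_mul_pow hunit] at hpow hT
  exact ⟨l2norm_mulVec_le hpow, hexp, fun T hnT ↦ l2norm_mulVec_le (hT T hnT)⟩
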